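/- Let δ, γ be real (or complex) numbers with γ² ≠ δ², and define p = −(δ+γ)/2 and q = 4√3/(3(γ² − δ²)). Then p³·q²·(3p − 2q) = 1 if and only if δ·γ·(δ − γ) = 4√3/9. In other words, the birational transformation (δ,γ) ↦ (p,q) transforms the cubic curve δγ(δ−γ) = 4√3/9 into the elliptic curve p³q²(3p−2q) = 1. -/

import Mathlib

/-!
In the coordinates `p = -(δ + γ) / 2` and `r = (δ - γ) / 2` the second component of the
transformation is determined by the symmetric relation `3pqr = √3`, so that `3(pqr)² = 1`. Hence
`r³ · p³q²(3p - 2q) = p²r - 2√3/9`, and the elliptic curve becomes `r(p² - r²) = 2√3/9`, which is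
the cubic `δγ(δ - γ) = 4√3/9`.
-/

section Field

variable {K : Type*} [Field K] {s p q r : K}

theorem three_mul_sq_eq_one_of_three_mul_eq (h3 : (3 : K) ≠ 0) (hs : s ^ 2 = 3) {t : K}
    (ht : 3 * t = s) : 3 * t ^ 2 = 1 := by
  apply mul_left_cancel₀ h3
  linear_combination (3 * t + s) * ht + hs

theorem sextic_mul_pow_three_eq (h3 : (3 : K) ≠ 0) (hs : s ^ 2 = 3) (hpqr : 3 * (p * q * r) = s) :
    p ^ 3 * q ^ 2 * (3 * p - 2 * q) * r ^ 3 = p ^ 2 * r - 2 * s / 9 := by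
  have h9 : (9 : K) = 3 * 3 := by norm_num
  calc
    p ^ 3 * q ^ 2 * (3 * p - 2 * q) * r ^ 3
      = 3 * (p * q * r) ^ 2 * (p ^ 2 * r) - 2 * (p * q * r) * (p * q * r) ^ 2 := by ring
    _ = 3 * (p * q * r) ^ 2 * (p ^ 2 * r - 2 * s / 9) := by
      rw [← hpqr, h9]
      field_simp
    _ = p ^ 2 * r - 2 * s / 9 := by
      rw [three_mul_sq_eq_one_of_three_mul_eq h3 hs hpqr, one_mul]

theorem sextic_eq_one_iff_cubic_eq (h3 : (3 : K) ≠ 0) (hs : s ^ 2 = 3)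
    (hpqr : 3 * (p * q * r) = s) :
    p ^ 3 * q ^ 2 * (3 * p - 2 * q) = 1 ↔ r * (p ^ 2 - r ^ 2) = 2 * s / 9 := by
  have hr : r ≠ 0 := by
    rintro rfl
    simpa using three_mul_sq_eq_one_of_three_mul_eq h3 hs hpqr
  calc
    p ^ 3 * q ^ 2 * (3 * p - 2 * q) = 1
      ↔ p ^ 3 * q ^ 2 * (3 * p - 2 * q) * r ^ 3 = r ^ 3 :=
        (mul_eq_right₀ (pow_ne_zero 3 hr)).symm
    _ ↔ p ^ 2 * r - 2 * s / 9 = r ^ 3 := by rw [sextic_mul_pow_three_eq h3 hs hpqr]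
    _ ↔ r * (p ^ 2 - r ^ 2) = 2 * s / 9 := by
      constructor <;> intro h <;> linear_combination h

theorem exists_eq_sub_and_eq_neg_sub (h2 : (2 : K) ≠ 0) (δ γ : K) :
    ∃ p r : K, δ = r - p ∧ γ = -r - p := by
  refine ⟨-(δ + γ) / 2, (δ - γ) / 2, ?_, ?_⟩ <;> field_simp <;> ring

theorem birational_transform_of_cubic_general (h2 : (2 : K) ≠ 0) (h3 : (3 : K) ≠ 0)
    (hs : s ^ 2 = 3) (δ γ : K) (h : γ ^ 2 ≠ δ ^ 2) :
    (-(δ + γ) / 2) ^ 3 * (4 * s / (3 * (γ ^ 2 - δ ^ 2))) ^ 2 *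
        (3 * (-(δ + γ) / 2) - 2 * (4 * s / (3 * (γ ^ 2 - δ ^ 2)))) = 1
      ↔ δ * γ * (δ - γ) = 4 * s / 9 := by
  obtain ⟨p, r, rfl, rfl⟩ := exists_eq_sub_and_eq_neg_sub h2 δ γ
  have hp : -(r - p + (-r - p)) / 2 = p := by field_simp; ring
  have hq : 3 * (p * (4 * s / (3 * ((-r - p) ^ 2 - (r - p) ^ 2))) * r) = s := by
    have hden : (-r - p) ^ 2 - (r - p) ^ 2 ≠ 0 := sub_ne_zero.mpr h
    field_simp
    ring
  have hcubic : (r - p) * (-r - p) * (r - p - (-r - p)) = 2 * (r * (p ^ 2 - r ^ 2)) := by ring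
  have hconst : 4 * s / 9 = 2 * (2 * s / 9) := by ring
  rw [hp, sextic_eq_one_iff_cubic_eq h3 hs hq, hcubic, hconst, mul_right_inj' h2]

end Field

/-- the birational transformation `p = -(δ+γ)/2`, `q = 4√3/(3(γ²-δ²))`
transforms the cubic curve `δγ(δ-γ) = 4√3/9` into the elliptic curve `p³q²(3p-2q) = 1`. -/
theorem birational_transform_of_cubic (δ γ : ℝ) (h : γ ^ 2 ≠ δ ^ 2) :
    (-(δ + γ) / 2) ^ 3 * (4 * Real.sqrt 3 / (3 * (γ ^ 2 - δ ^ 2))) ^ 2 *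
        (3 * (-(δ + γ) / 2) - 2 * (4 * Real.sqrt 3 / (3 * (γ ^ 2 - δ ^ 2)))) = 1
      ↔ δ * γ * (δ - γ) = 4 * Real.sqrt 3 / 9 :=
  birational_transform_of_cubic_general two_ne_zero three_ne_zero
    (Real.sq_sqrt zero_le_three) δ γ h
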